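/- For every pair of integers p, q ≥ 2 there exists an injective group homomorphism Ψ : F(p) → F(q) which is a quasi-isometric embedding: there is a constant C ≥ 1 such that for all x ∈ F(p), (1/C)·|x|_p ≤ |Ψ(x)|_q ≤ C·|x|_p. -/

import Mathlib

open scoped BigOperators

/-- Relators of Thompson's group `F(p)`: `x_i⁻¹ x_j x_i x_{j+p-1}⁻¹` for `i < j`. -/
def thompsonRels (p : ℕ) : Set (FreeGroup ℕ) :=
  { rel | ∃ i j : ℕ, i < j ∧
      rel = (FreeGroup.of i)⁻¹ * FreeGroup.of j * FreeGroup.of i *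
        (FreeGroup.of (j + p - 1))⁻¹ }

/-- Thompson's group `F(p)`, presented with generators `x_i` (`i : ℕ`) and relations
`x_i⁻¹ · x_j · x_i = x_{j+p-1}` for `i < j`. -/
def FP (p : ℕ) : Type := PresentedGroup (thompsonRels p)

instance (p : ℕ) : Group (FP p) :=
  inferInstanceAs (Group (PresentedGroup (thompsonRels p)))

/-- The generator `x_i` of `F(p)`. -/
def xg (p : ℕ) (i : ℕ) : FP p := PresentedGroup.of (rels := thompsonRels p) i

/-- Word length of `x : G` with respect to a set `S` of generators: the least length of a
word in elements of `S ∪ S⁻¹` whose product is `x`. -/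
noncomputable def wordLength {G : Type*} [Group G] (S : Set G) (x : G) : ℕ :=
  sInf { n : ℕ | ∃ w : List G, w.length = n ∧ (∀ g ∈ w, g ∈ S ∨ g⁻¹ ∈ S) ∧ w.prod = x }

/-- The word length `|x|_p` on `F(p)`, with respect to the generators `x_0, …, x_{p-1}`. -/
noncomputable def wlen (p : ℕ) (x : FP p) : ℕ :=
  wordLength { g : FP p | ∃ i, i < p ∧ g = xg p i } x

/-- The data of a candidate normal form
`x_{i₁}^{r₁} ⋯ x_{iₙ}^{rₙ} · x_{jₘ}^{-sₘ} ⋯ x_{j₁}^{-s₁}` in `F(p)`. -/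
structure NFData (p : ℕ) where
  n : ℕ
  m : ℕ
  i : Fin n → ℕ
  r : Fin n → ℕ
  j : Fin m → ℕ
  s : Fin m → ℕ

namespace NFData

variable {p : ℕ}

/-- The element of `F(p)` represented by the normal form data, namely
`x_{i₁}^{r₁} ⋯ x_{iₙ}^{rₙ} · (x_{j₁}^{s₁} ⋯ x_{jₘ}^{sₘ})⁻¹`. -/
def elem (d : NFData p) : FP p :=
  (List.ofFn fun k => xg p (d.i k) ^ d.r k).prod *
    ((List.ofFn fun l => xg p (d.j l) ^ d.s l).prod)⁻¹

/-- The generator with index `a` occurs in `d` (with positive or negative exponent). -/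
def Occurs (d : NFData p) (a : ℕ) : Prop :=
  (∃ k, d.i k = a) ∨ (∃ l, d.j l = a)

/-- `d` is a normal form of `x ∈ F(p)`: the indices are strictly increasing, the exponents
are at least `1`, `iₙ ≠ jₘ` when both parts are nonempty, whenever a generator and its
inverse both occur one of the following `p-1` generators (or its inverse) occurs as well,
and the corresponding product equals `x`. -/
def IsNormalFormOf (d : NFData p) (x : FP p) : Prop :=
  StrictMono d.i ∧ StrictMono d.j ∧
    (∀ k, 1 ≤ d.r k) ∧ (∀ l, 1 ≤ d.s l) ∧
    (∀ (hn : 0 < d.n) (hm : 0 < d.m),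
      d.i ⟨d.n - 1, Nat.sub_lt hn Nat.one_pos⟩ ≠ d.j ⟨d.m - 1, Nat.sub_lt hm Nat.one_pos⟩) ∧
    (∀ a : ℕ, (∃ k, d.i k = a) → (∃ l, d.j l = a) →
      ∃ b : ℕ, a < b ∧ b ≤ a + p - 1 ∧ d.Occurs b) ∧
    x = d.elem

/-- The quantity `D(x) = r₁ + ⋯ + rₙ + s₁ + ⋯ + sₘ + iₙ + jₘ` (the terms `iₙ`, `jₘ` being
omitted when `n = 0`, resp. `m = 0`). -/
def D (d : NFData p) : ℕ :=
  (∑ k, d.r k) + (∑ l, d.s l) +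
    (if hn : 0 < d.n then d.i ⟨d.n - 1, Nat.sub_lt hn Nat.one_pos⟩ else 0) +
    (if hm : 0 < d.m then d.j ⟨d.m - 1, Nat.sub_lt hm Nat.one_pos⟩ else 0)

end NFData

/-- The tail sum `r_k + r_{k+1} + ⋯ + r_n`. -/
def tailSum {n : ℕ} (r : Fin n → ℕ) (k : Fin n) : ℕ :=
  ∑ l ∈ Finset.univ.filter (fun l => k ≤ l), r l
/-- `N(x)` associated to a normal form in `F(2)` (Theorem 3):
the maximum of `i_k + r_k + ⋯ + r_n + 1` and `j_l + s_l + ⋯ + s_m + 1`. -/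
def NFData.N2 (d : NFData 2) : ℕ :=
  max (Finset.univ.sup fun k => d.i k + tailSum d.r k + 1)
      (Finset.univ.sup fun l => d.j l + tailSum d.s l + 1)

/-- `N(x)` associated to a normal form in `F(p)` (Theorem 6):
the maximum of `⌊i_k/(p-1)⌋ + r_k + ⋯ + r_n + 1` and `⌊j_l/(p-1)⌋ + s_l + ⋯ + s_m + 1`. -/
def NFData.Ngen {p : ℕ} (d : NFData p) : ℕ :=
  max (Finset.univ.sup fun k => d.i k / (p - 1) + tailSum d.r k + 1)
      (Finset.univ.sup fun l => d.j l / (p - 1) + tailSum d.s l + 1)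

/-- `N(x) = max { i_k + r_k + ⋯ + r_n + 1 }` for a positive word (Proposition 2). -/
def posN {n : ℕ} (i r : Fin n → ℕ) : ℕ :=
  Finset.univ.sup fun k => i k + tailSum r k + 1

/-- `N₁(x) = max { ⌊i_k/(p-1)⌋ + r_k + ⋯ + r_n + 1 }` (Proposition 4). -/
def posN1 (p : ℕ) {n : ℕ} (i r : Fin n → ℕ) : ℕ :=
  Finset.univ.sup fun k => i k / (p - 1) + tailSum r k + 1

/-- `N₂(x) = max { i_k + (p-1)(r_k + ⋯ + r_n) + 1 }` (Proposition 5). -/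
def posN2 (p : ℕ) {n : ℕ} (i r : Fin n → ℕ) : ℕ :=
  Finset.univ.sup fun k => i k + (p - 1) * tailSum r k + 1

/-- `x ∈ ℤ[1/p]`. -/
def IsPAdicRational (p : ℕ) (x : ℝ) : Prop :=
  ∃ (a : ℤ) (n : ℕ), x = (a : ℝ) / (p : ℝ) ^ n

/-- Thompson's group `F(p)` realized as a set of permutations of `ℝ`: orientation-preserving
piecewise-linear homeomorphisms of `[0,1]` (extended by the identity outside `[0,1]`) with
finitely many breakpoints, all in `ℤ[1/p]`, whose slopes are integer powers of `p`. -/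
def PLSet (p : ℕ) : Set (Equiv.Perm ℝ) :=
  { f | Monotone f ∧ (∀ t : ℝ, t ≤ 0 → f t = t) ∧ (∀ t : ℝ, 1 ≤ t → f t = t) ∧
    ∃ B : Finset ℝ, (∀ b ∈ B, IsPAdicRational p b) ∧
      ∀ t : ℝ, t ∉ (B : Set ℝ) →
        ∃ ε > (0 : ℝ), ∃ (k : ℤ) (c : ℝ), ∀ s : ℝ, |s - t| < ε → f s = (p : ℝ) ^ k * s + c }

/-- The map `Φ_p` on homeomorphisms: `(Φ_p f)(t) = t` for `t ≤ 1 - 1/p`, and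
`(Φ_p f)(t) = ((p-1) + f(pt - (p-1)))/p` for `t ≥ 1 - 1/p`. -/
noncomputable def PhiMap (p : ℕ) (f : ℝ → ℝ) : ℝ → ℝ := fun t =>
  if t ≤ 1 - 1 / (p : ℝ) then t
  else (((p : ℝ) - 1) + f ((p : ℝ) * t - ((p : ℝ) - 1))) / (p : ℝ)

/-- The piecewise-linear homeomorphism `f_i` of `ℝ` corresponding to the generator `x_i`
of `F(p)`. -/
noncomputable def fgen (p : ℕ) (i : ℕ) : ℝ → ℝ := fun t =>
  if t ≤ (i : ℝ) then t
  else if t ≤ (i : ℝ) + 1 then (p : ℝ) * t + (i : ℝ) * (1 - (p : ℝ))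
  else t + (p : ℝ) - 1

/-!
Every element of `F(p)` is a fraction `P Q⁻¹` of positive words, that is, a pair of `p`-ary forests
with leaves numbered from left to right. The embedding `x_i ↦ x_{(q - 1) i}^{p - 1}` replaces each
`p`-ary caret by a left comb of `p - 1` carets of arity `q`.

For the lower bound let `F(q)` act on the ends of the infinite `q`-ary forest. An element of length
`n` maps all but at most `n` cones canonically onto cones, and does so with every whole tree from
root number `2 q n` on. If the fraction `P Q⁻¹` is reduced, its image fails to do so at the node
corresponding to any caret of `Q`: otherwise some exposed caret of `Q` would be mapped onto a
caret, and the comb code can only be read in one way, so that this caret would be exposed in `P`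
as well and cancel. The length of the image therefore bounds the number of carets of `P` and `Q` as
well as their roots, and these bound the length of `P Q⁻¹`.
-/

section WordLength

variable {G : Type*} [Group G] {S : Set G}

theorem wordLength_prod_le {w : List G} (hw : ∀ g ∈ w, g ∈ S ∨ g⁻¹ ∈ S) :
    wordLength S w.prod ≤ w.length :=
  Nat.sInf_le ⟨w, rfl, hw, rfl⟩

theorem exists_prod_eq_of_closure_eq_top (hS : Subgroup.closure S = ⊤) (x : G) :
    ∃ w : List G, w.length = wordLength S x ∧ (∀ g ∈ w, g ∈ S ∨ g⁻¹ ∈ S) ∧ w.prod = x := by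
  have hx : x ∈ Submonoid.closure (S ∪ S⁻¹) := by
    rw [← Subgroup.closure_toSubmonoid, hS]
    exact Submonoid.mem_top x
  obtain ⟨w, hw, hx⟩ := Submonoid.exists_list_of_mem_closure hx
  have hne : {n | ∃ w : List G, w.length = n ∧ (∀ g ∈ w, g ∈ S ∨ g⁻¹ ∈ S) ∧ w.prod = x}.Nonempty :=
    ⟨w.length, w, rfl, hw, hx⟩
  exact Nat.sInf_mem hne

theorem wordLength_one : wordLength S (1 : G) = 0 :=
  Nat.le_zero.1 (wordLength_prod_le (w := []) (by simp))

theorem wordLength_le_one {x : G} (hx : x ∈ S) : wordLength S x ≤ 1 := by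
  simpa using wordLength_prod_le (w := [x]) (by simpa using Or.inl hx)

theorem wordLength_eq_zero_iff (hS : Subgroup.closure S = ⊤) {x : G} :
    wordLength S x = 0 ↔ x = 1 := by
  refine ⟨fun h => ?_, fun h => h ▸ wordLength_one⟩
  obtain ⟨w, hw, -, rfl⟩ := exists_prod_eq_of_closure_eq_top hS x
  rw [List.length_eq_zero_iff.1 (hw.trans h), List.prod_nil]

theorem wordLength_mul_le (hS : Subgroup.closure S = ⊤) (x y : G) :
    wordLength S (x * y) ≤ wordLength S x + wordLength S y := by
  obtain ⟨v, hv, hvS, hx⟩ := exists_prod_eq_of_closure_eq_top hS x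
  obtain ⟨w, hw, hwS, hy⟩ := exists_prod_eq_of_closure_eq_top hS y
  rw [← hv, ← hw, ← hx, ← hy, ← List.prod_append, ← List.length_append]
  exact wordLength_prod_le fun g hg => (List.mem_append.1 hg).elim (hvS g) (hwS g)

theorem wordLength_inv_le (hS : Subgroup.closure S = ⊤) (x : G) :
    wordLength S x⁻¹ ≤ wordLength S x := by
  obtain ⟨w, hw, hwS, hx⟩ := exists_prod_eq_of_closure_eq_top hS x
  have hinv : ∀ g ∈ (w.map (·⁻¹)).reverse, g ∈ S ∨ g⁻¹ ∈ S := by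
    simp only [List.mem_reverse, List.mem_map]
    rintro _ ⟨g, hg, rfl⟩
    simpa using (hwS g hg).symm
  rw [← hw, ← hx, List.prod_inv_reverse]
  simpa using wordLength_prod_le hinv

theorem wordLength_inv (hS : Subgroup.closure S = ⊤) (x : G) :
    wordLength S x⁻¹ = wordLength S x :=
  (wordLength_inv_le hS x).antisymm (by simpa using wordLength_inv_le hS x⁻¹)

theorem wordLength_pow_le (hS : Subgroup.closure S = ⊤) (x : G) (k : ℕ) :
    wordLength S (x ^ k) ≤ k * wordLength S x := by
  induction k with
  | zero => simp [wordLength_one]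
  | succ k ih =>
    rw [pow_succ, Nat.succ_mul]
    exact (wordLength_mul_le hS _ _).trans (Nat.add_le_add_right ih _)

theorem wordLength_induction (hS : Subgroup.closure S = ⊤) {P : ℕ → G → Prop} (one : P 0 1)
    (mem : ∀ s ∈ S, P 1 s) (inv_mem : ∀ s ∈ S, P 1 s⁻¹)
    (mul : ∀ {m n x y}, P m x → P n y → P (m + n) (x * y)) (x : G) : P (wordLength S x) x := by
  obtain ⟨w, hw, hwS, rfl⟩ := exists_prod_eq_of_closure_eq_top hS x
  rw [← hw]
  clear hw
  induction w with
  | nil => exact one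
  | cons g w ih =>
    rw [List.forall_mem_cons] at hwS
    have hg : P 1 g := hwS.1.elim (mem g) fun h => by simpa using inv_mem _ h
    simpa [add_comm] using mul hg (ih hwS.2)

variable {H : Type*} [Group H] {T : Set H}

theorem exists_wordLength_map_le (hS : Subgroup.closure S = ⊤) (hfin : S.Finite)
    (hT : Subgroup.closure T = ⊤) (f : G →* H) :
    ∃ K, ∀ x, wordLength T (f x) ≤ K * wordLength S x := by
  obtain ⟨K, hK⟩ := (hfin.image fun s => wordLength T (f s)).bddAbove
  have hgen : ∀ s ∈ S, wordLength T (f s) ≤ K := fun s hs => hK (Set.mem_image_of_mem _ hs)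
  refine ⟨K, wordLength_induction hS (P := fun n x => wordLength T (f x) ≤ K * n) ?_
    (fun s hs => ?_) (fun s hs => ?_) fun {m n x y} hx hy => ?_⟩
  · simp [wordLength_one]
  · simpa using hgen s hs
  · simpa [wordLength_inv hT] using hgen s hs
  · rw [map_mul, mul_add]
    exact (wordLength_mul_le hT _ _).trans (Nat.add_le_add hx hy)

theorem injective_of_wordLength_le_mul (hS : Subgroup.closure S = ⊤) {f : G →* H} {K : ℕ}
    (hf : ∀ x, wordLength S x ≤ K * wordLength T (f x)) : Function.Injective f := by
  refine (injective_iff_map_eq_one f).2 fun x hx => (wordLength_eq_zero_iff hS).1 ?_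
  simpa [hx, wordLength_one] using hf x

theorem exists_quasiIsometry_constant {f : G →* H} {K L : ℕ}
    (hK : ∀ x, wordLength T (f x) ≤ K * wordLength S x)
    (hL : ∀ x, wordLength S x ≤ L * wordLength T (f x)) :
    ∃ C : ℝ, 1 ≤ C ∧ ∀ x, 1 / C * wordLength S x ≤ wordLength T (f x) ∧
      (wordLength T (f x) : ℝ) ≤ C * wordLength S x := by
  refine ⟨(1 + K + L : ℕ), by exact_mod_cast (by omega : 1 ≤ 1 + K + L), fun x => ⟨?_, ?_⟩⟩
  · rw [one_div, inv_mul_le_iff₀ (by positivity)]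
    exact_mod_cast (hL x).trans (Nat.mul_le_mul_right _ (by omega))
  · exact_mod_cast (hK x).trans (Nat.mul_le_mul_right _ (by omega))

end WordLength

namespace Thompson

section Presentation

variable {p : ℕ}

/-- The generating set `{x_0, …, x_{p-1}}` of `F(p)`; `wlen p` is by definition the word length
with respect to it. -/
abbrev generators (p : ℕ) : Set (FP p) := {g | ∃ i, i < p ∧ g = xg p i}

theorem finite_generators (p : ℕ) : (generators p).Finite :=
  ((Set.finite_Iio p).image (xg p)).subset <| by
    rintro _ ⟨i, hi, rfl⟩
    exact Set.mem_image_of_mem _ hi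

theorem xg_mem_generators {i : ℕ} (hi : i < p) : xg p i ∈ generators p :=
  ⟨i, hi, rfl⟩

theorem closure_range_xg (p : ℕ) : Subgroup.closure (Set.range (xg p)) = ⊤ :=
  PresentedGroup.closure_range_of _

variable [NeZero p]

theorem xg_mul_xg {i j : ℕ} (hij : i < j) :
    xg p j * xg p i = xg p i * xg p (j + (p - 1)) := by
  have hrel : (xg p i)⁻¹ * xg p j * xg p i * (xg p (j + p - 1))⁻¹ = 1 :=
    PresentedGroup.one_of_mem (rels := thompsonRels p) ⟨i, j, hij, rfl⟩
  rwa [Nat.add_sub_assoc NeZero.one_le, mul_inv_eq_one, mul_assoc, inv_mul_eq_iff_eq_mul] at hrel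

theorem xg_mul_xg_pow {i j : ℕ} (hij : i < j) (k : ℕ) :
    xg p j * xg p i ^ k = xg p i ^ k * xg p (j + k * (p - 1)) := by
  induction k with
  | zero => simp
  | succ k ih =>
    have hlt : i < j + k * (p - 1) := by omega
    rw [pow_succ, ← mul_assoc, ih, mul_assoc, xg_mul_xg hlt, ← mul_assoc, Nat.succ_mul, add_assoc]

/-- The homomorphism out of `F(p)` determined by a sequence satisfying Thompson's relations. -/
def lift {G : Type*} [Group G] (f : ℕ → G)
    (hf : ∀ ⦃i j⦄, i < j → f j * f i = f i * f (j + (p - 1))) : FP p →* G :=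
  PresentedGroup.toGroup (rels := thompsonRels p) (f := f) (by
    rintro _ ⟨i, j, hij, rfl⟩
    simp only [map_mul, map_inv, FreeGroup.lift_apply_of]
    rw [Nat.add_sub_assoc NeZero.one_le, mul_inv_eq_one, mul_assoc, inv_mul_eq_iff_eq_mul, hf hij])

@[simp]
theorem lift_xg {G : Type*} [Group G] (f : ℕ → G)
    (hf : ∀ ⦃i j⦄, i < j → f j * f i = f i * f (j + (p - 1))) (i : ℕ) :
    lift f hf (xg p i) = f i :=
  PresentedGroup.toGroup.of _

end Presentation

section PositiveWords

variable {p : ℕ}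

/-- The positive element `x_{a₁} ⋯ x_{aₙ}` of `F(p)`. -/
def posWord (p : ℕ) (L : List ℕ) : FP p := (L.map (xg p)).prod

@[simp]
theorem posWord_nil : posWord p [] = 1 := rfl

theorem posWord_cons (a : ℕ) (L : List ℕ) : posWord p (a :: L) = xg p a * posWord p L := by
  simp [posWord]

theorem posWord_append (L M : List ℕ) : posWord p (L ++ M) = posWord p L * posWord p M := by
  simp [posWord]

theorem exists_inv_xg_mul_posWord [NeZero p] (i : ℕ) (L : List ℕ) :
    ∃ P Q, (xg p i)⁻¹ * posWord p L = posWord p P * (posWord p Q)⁻¹ := by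
  induction L generalizing i with
  | nil => exact ⟨[], [i], by simp [posWord]⟩
  | cons a L ih =>
    rw [posWord_cons]
    rcases lt_trichotomy a i with h | rfl | h
    · obtain ⟨P, Q, hPQ⟩ := ih (i + (p - 1))
      refine ⟨a :: P, Q, ?_⟩
      rw [posWord_cons, mul_assoc, ← hPQ, inv_mul_eq_iff_eq_mul, ← mul_assoc, ← mul_assoc,
        xg_mul_xg h, mul_inv_cancel_right]
    · exact ⟨L, [], by simp⟩
    · obtain ⟨P, Q, hPQ⟩ := ih i
      refine ⟨(a + (p - 1)) :: P, Q, ?_⟩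
      rw [posWord_cons, mul_assoc, ← hPQ, inv_mul_eq_iff_eq_mul, ← mul_assoc, ← mul_assoc,
        ← xg_mul_xg h, mul_inv_cancel_right]

theorem exists_eq_posWord_mul_inv [NeZero p] (x : FP p) :
    ∃ P Q, x = posWord p P * (posWord p Q)⁻¹ := by
  have hx : x ∈ Subgroup.closure (Set.range (xg p)) := closure_range_xg p ▸ Subgroup.mem_top x
  induction hx using Subgroup.closure_induction_left with
  | one => exact ⟨[], [], by simp⟩
  | mul_left _ hi _ _ ih =>
    obtain ⟨i, rfl⟩ := hi
    obtain ⟨P, Q, rfl⟩ := ih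
    exact ⟨i :: P, Q, by rw [posWord_cons, mul_assoc]⟩
  | inv_mul_cancel _ hi _ _ ih =>
    obtain ⟨i, rfl⟩ := hi
    obtain ⟨P, Q, rfl⟩ := ih
    obtain ⟨P', Q', hPQ⟩ := exists_inv_xg_mul_posWord (p := p) i P
    exact ⟨P', Q ++ Q', by rw [← mul_assoc, hPQ, posWord_append, mul_inv_rev, mul_assoc]⟩

theorem exists_isChain_xg_mul_posWord [NeZero p] {a c : ℕ} {L : List ℕ}
    (hL : (c :: L).IsChain (· ≤ ·)) (hca : c ≤ a) :
    ∃ L' : List ℕ, (c :: L').IsChain (· ≤ ·) ∧ L'.length = L.length + 1 ∧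
      xg p a * posWord p L = posWord p L' := by
  induction L generalizing a c with
  | nil => exact ⟨[a], by simpa using hca, rfl, by rw [posWord_cons]⟩
  | cons b L ih =>
    obtain ⟨hcb, hbL⟩ := List.isChain_cons_cons.1 hL
    by_cases hab : a ≤ b
    · refine ⟨a :: b :: L, ?_, rfl, (posWord_cons _ _).symm⟩
      exact List.isChain_cons_cons.2 ⟨hca, List.isChain_cons_cons.2 ⟨hab, hbL⟩⟩
    · rw [not_le] at hab
      obtain ⟨L', hchain, hlen, hprod⟩ := ih hbL (a := a + (p - 1)) (by omega)
      refine ⟨b :: L', List.isChain_cons_cons.2 ⟨hcb, hchain⟩, by simp [hlen], ?_⟩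
      rw [posWord_cons, posWord_cons, ← hprod, ← mul_assoc, ← mul_assoc, xg_mul_xg hab]

theorem exists_isChain_posWord_eq [NeZero p] (L : List ℕ) :
    ∃ L' : List ℕ, (0 :: L').IsChain (· ≤ ·) ∧ L'.length = L.length ∧
      posWord p L = posWord p L' := by
  induction L with
  | nil => exact ⟨[], by simp, rfl, rfl⟩
  | cons a L ih =>
    obtain ⟨M, hM, hMlen, hMprod⟩ := ih
    obtain ⟨N, hN, hNlen, hNprod⟩ := exists_isChain_xg_mul_posWord (p := p) hM a.zero_le
    exact ⟨N, hN, by simp [hNlen, hMlen], by rw [posWord_cons, hMprod, hNprod]⟩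

end PositiveWords

section LengthEstimate

variable {p : ℕ}

/-- The exponent `κ` for which `x_0^κ x_a x_0^{-κ}` is one of the generators `x_0, …, x_{p-1}`. -/
def conjExp (p a : ℕ) : ℕ := (a - 1) / (p - 1)

theorem conjExp_le_self (a : ℕ) : conjExp p a ≤ a :=
  (Nat.div_le_self _ _).trans (Nat.sub_le _ _)

theorem conjExp_mono {a b : ℕ} (hab : a ≤ b) : conjExp p a ≤ conjExp p b :=
  Nat.div_le_div_right (Nat.sub_le_sub_right hab 1)

variable [p.AtLeastTwo]

theorem exists_xg_eq_conj (a : ℕ) :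
    ∃ r < p, xg p a = (xg p 0 ^ conjExp p a)⁻¹ * (xg p r * xg p 0 ^ conjExp p a) := by
  have hp : 2 ≤ p := Nat.AtLeastTwo.prop
  rcases Nat.eq_zero_or_pos a with rfl | ha
  · exact ⟨0, by omega, by simp [conjExp]⟩
  · have hdiv := Nat.mod_add_div (a - 1) (p - 1)
    have hmod := Nat.mod_lt (a - 1) (show 0 < p - 1 by omega)
    refine ⟨1 + (a - 1) % (p - 1), by omega, ?_⟩
    have ha' : 1 + (a - 1) % (p - 1) + conjExp p a * (p - 1) = a := by
      rw [conjExp, mul_comm]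
      omega
    rw [xg_mul_xg_pow (by omega), ha', inv_mul_cancel_left]

theorem xg_zero_mem_generators : xg p 0 ∈ generators p :=
  xg_mem_generators (zero_lt_two.trans_le Nat.AtLeastTwo.prop)

theorem closure_generators : Subgroup.closure (generators p) = ⊤ := by
  rw [eq_top_iff, ← closure_range_xg p, Subgroup.closure_le]
  rintro _ ⟨a, rfl⟩
  obtain ⟨r, hr, ha⟩ := exists_xg_eq_conj (p := p) a
  have h0 : xg p 0 ^ conjExp p a ∈ Subgroup.closure (generators p) :=
    pow_mem (Subgroup.subset_closure xg_zero_mem_generators) _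
  rw [SetLike.mem_coe, ha]
  exact mul_mem (inv_mem h0) (mul_mem (Subgroup.subset_closure (xg_mem_generators hr)) h0)

theorem wlen_mul_le (x y : FP p) : wlen p (x * y) ≤ wlen p x + wlen p y :=
  wordLength_mul_le closure_generators x y

theorem wlen_inv (x : FP p) : wlen p x⁻¹ = wlen p x :=
  wordLength_inv closure_generators x

theorem wlen_xg_zero_pow_le (k : ℕ) : wlen p (xg p 0 ^ k) ≤ k :=
  (wordLength_pow_le closure_generators _ k).trans <|
    (Nat.mul_le_mul_left k (wordLength_le_one xg_zero_mem_generators)).trans_eq (mul_one k)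

theorem wlen_xg_zero_pow_mul_posWord_add_le {K c : ℕ} {L : List ℕ}
    (hL : (c :: L).IsChain (· ≤ ·)) (hK : ∀ a ∈ c :: L, a ≤ K) :
    wlen p (xg p 0 ^ conjExp p c * posWord p L) + conjExp p c ≤ L.length + 2 * K := by
  induction L generalizing c with
  | nil =>
    have hcK : conjExp p c ≤ K := (conjExp_le_self c).trans (hK c (by simp))
    have := wlen_xg_zero_pow_le (p := p) (conjExp p c)
    rw [posWord_nil, mul_one, List.length_nil]
    omega
  | cons a L ih =>
    obtain ⟨hca, haL⟩ := List.isChain_cons_cons.1 hL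
    have ih := ih haL fun b hb => hK b (List.mem_cons_of_mem _ hb)
    obtain ⟨r, hr, hxa⟩ := exists_xg_eq_conj (p := p) a
    obtain ⟨d, hd⟩ := Nat.exists_eq_add_of_le (conjExp_mono (p := p) hca)
    have hsplit : xg p 0 ^ conjExp p c * posWord p (a :: L) =
        (xg p 0 ^ d)⁻¹ * (xg p r * (xg p 0 ^ conjExp p a * posWord p L)) := by
      rw [posWord_cons, hxa, hd, add_comm, pow_add]
      group
    have hpow := wlen_inv (xg p 0 ^ d) ▸ wlen_xg_zero_pow_le (p := p) d
    have hxr : wlen p (xg p r) ≤ 1 := wordLength_le_one (xg_mem_generators hr)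
    have h₁ := wlen_mul_le (xg p 0 ^ d)⁻¹ (xg p r * (xg p 0 ^ conjExp p a * posWord p L))
    have h₂ := wlen_mul_le (xg p r) (xg p 0 ^ conjExp p a * posWord p L)
    rw [hsplit, List.length_cons]
    omega

theorem wlen_posWord_le {K : ℕ} {L : List ℕ} (hL : (0 :: L).IsChain (· ≤ ·))
    (hK : ∀ a ∈ L, a ≤ K) : wlen p (posWord p L) ≤ L.length + 2 * K := by
  simpa [conjExp] using
    wlen_xg_zero_pow_mul_posWord_add_le (p := p) hL (List.forall_mem_cons.2 ⟨K.zero_le, hK⟩)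

end LengthEstimate

section Graft

variable {p : ℕ} {α β : Type*} {cons : Fin p → α → α} {cons' : Fin p → β → β}

/-- The generator `x_a` of `F(p)` attaches the trees with roots `a, …, a + p - 1` to a new caret
with root `a`. On pairs of a root and an address below it, it prefixes the letter `j` to addresses
below `a + j`, and renumbers the other roots. Here `cons` prefixes a letter to an address, so that
addresses may be finite or infinite words. -/
def graft (cons : Fin p → α → α) (a : ℕ) (v : ℕ × α) : ℕ × α :=
  if v.1 < a then v
  else if h : v.1 - a < p then (a, cons ⟨v.1 - a, h⟩ v.2)
  else (v.1 - (p - 1), v.2)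

theorem graft_of_lt {a i : ℕ} (w : α) (hia : i < a) : graft cons a (i, w) = (i, w) :=
  if_pos hia

theorem graft_add (a : ℕ) (j : Fin p) (w : α) : graft cons a (a + j, w) = (a, cons j w) := by
  simp [graft]

theorem graft_of_gt {a i : ℕ} (w : α) (hai : a < i) :
    graft cons a (i + (p - 1), w) = (i, w) := by
  have h₁ : ¬ i + (p - 1) < a := by omega
  have h₂ : ¬ i + (p - 1) - a < p := by omega
  simp [graft, h₁, h₂]

theorem graft_add_of_lt {a i : ℕ} (j : Fin p) (w : α) (hai : a < i) :
    graft cons a (i + (p - 1) + j, w) = (i + j, w) := by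
  rw [add_right_comm, graft_of_gt w (by omega)]

theorem root_cases (p : ℕ) [NeZero p] (a i : ℕ) :
    i < a ∨ (∃ j : Fin p, i = a + j) ∨ ∃ k, a < k ∧ i = k + (p - 1) := by
  have hp : 0 < p := NeZero.pos p
  by_cases h₁ : i < a
  · exact Or.inl h₁
  · by_cases h₂ : i - a < p
    · exact Or.inr (Or.inl ⟨⟨i - a, h₂⟩, by simp only; omega⟩)
    · exact Or.inr (Or.inr ⟨i - (p - 1), by omega, by omega⟩)

theorem graft_map {h : α → β} (hcons : ∀ j w, h (cons j w) = cons' j (h w)) (a : ℕ)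
    (v : ℕ × α) : graft cons' a (v.map id h) = (graft cons a v).map id h := by
  simp only [graft, Prod.map_fst, Prod.map_snd, id]
  split_ifs <;> simp [hcons, Prod.map]

theorem graft_comm [NeZero p] {i j : ℕ} (hij : i < j) (v : ℕ × α) :
    graft cons j (graft cons i v) = graft cons i (graft cons (j + (p - 1)) v) := by
  obtain ⟨m, w⟩ := v
  rcases root_cases p i m with hm | ⟨d, rfl⟩ | ⟨k, hk, rfl⟩
  · rw [graft_of_lt _ hm, graft_of_lt (i := m) _ (by omega), graft_of_lt (i := m) _ (by omega),
      graft_of_lt _ hm]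
  · rw [graft_add, graft_of_lt _ hij, graft_of_lt (i := i + d) _ (by omega), graft_add]
  · rw [graft_of_gt _ hk]
    rcases root_cases p j k with hkj | ⟨d, rfl⟩ | ⟨l, hl, rfl⟩
    · rw [graft_of_lt _ hkj, graft_of_lt (i := k + (p - 1)) _ (by omega), graft_of_gt _ hk]
    · rw [graft_add, add_right_comm, graft_add, graft_of_gt _ hij]
    · rw [graft_of_gt _ hl, graft_of_gt _ (by omega), graft_of_gt _ (by omega)]

theorem graft_injective [NeZero p] (hcons : Function.Injective2 cons) (a : ℕ) :
    Function.Injective (graft cons a) := by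
  rintro ⟨i, w⟩ ⟨i', w'⟩ h
  rcases root_cases p a i with h₁ | ⟨j, rfl⟩ | ⟨k, h₁, rfl⟩ <;>
  rcases root_cases p a i' with h₂ | ⟨j', rfl⟩ | ⟨k', h₂, rfl⟩ <;>
  simp only [graft_of_lt, graft_add, graft_of_gt, Prod.mk.injEq, hcons.eq_iff, *] at h ⊢ <;>
  grind

theorem exists_graft_eq {a : ℕ} {v : ℕ × α} (hv : v.1 = a → ∃ j w, v.2 = cons j w) :
    ∃ u, graft cons a u = v := by
  obtain ⟨i, w⟩ := v
  rcases lt_trichotomy i a with h | rfl | h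
  · exact ⟨(i, w), graft_of_lt w h⟩
  · obtain ⟨j, w, rfl⟩ := hv rfl
    exact ⟨(i + j, w), graft_add i j w⟩
  · exact ⟨(i + (p - 1), w), graft_of_gt w h⟩

theorem fst_le_fst_graft_add [NeZero p] (a : ℕ) (v : ℕ × α) :
    v.1 ≤ (graft cons a v).1 + (p - 1) := by
  obtain ⟨i, w⟩ := v
  rcases root_cases p a i with h | ⟨j, rfl⟩ | ⟨k, h, rfl⟩
  · simp [graft_of_lt _ h]
  · simp only [graft_add]
    omega
  · simp [graft_of_gt _ h]

end Graft

section Forests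

variable {p : ℕ}

/-- A node of the infinite `p`-ary forest with roots `0, 1, 2, …`: a root and an address below
it. -/
abbrev Node (p : ℕ) : Type := ℕ × List (Fin p)

/-- The node reached from `v` by following the address `w`. -/
def Node.append (v : Node p) (w : List (Fin p)) : Node p := v.map id (· ++ w)

theorem graft_append (a : ℕ) (v : Node p) (w : List (Fin p)) :
    graft List.cons a (v.append w) = Node.append (graft List.cons a v) w :=
  graft_map (fun j u => (List.cons_append (a := j) (as := u)).symm) a v

theorem graft_cons_injective [NeZero p] (a : ℕ) :
    Function.Injective (graft (List.cons : Fin p → _) a) :=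
  graft_injective (fun _ _ _ _ => List.cons.inj) a

theorem graft_ne_root [NeZero p] (a : ℕ) (v : Node p) : graft List.cons a v ≠ (a, []) := by
  obtain ⟨i, w⟩ := v
  rcases root_cases p a i with h | ⟨j, rfl⟩ | ⟨k, h, rfl⟩
  · simp [graft_of_lt _ h, h.ne]
  · simp [graft_add]
  · simp [graft_of_gt _ h, h.ne']

theorem exists_graft_eq_of_ne_root {a : ℕ} {v : Node p} (hv : v ≠ (a, [])) :
    ∃ u, graft List.cons a u = v := by
  refine exists_graft_eq fun ha => List.exists_cons_of_ne_nil fun hnil => hv ?_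
  exact Prod.ext ha hnil

/-- The `l`-th leaf of the forest of the positive word with indices `L`. -/
def leaf (p : ℕ) : List ℕ → ℕ → Node p
  | [], l => (l, [])
  | a :: L, l => graft List.cons a (leaf p L l)

/-- The carets (inner nodes) of the forest of the positive word with indices `L`. -/
def carets (p : ℕ) : List ℕ → List (Node p)
  | [] => []
  | a :: L => (a, []) :: (carets p L).map (graft List.cons a)

theorem length_carets (L : List ℕ) : (carets p L).length = L.length := by
  induction L with
  | nil => rfl
  | cons a L ih => simp [carets, ih]

theorem nodup_carets [NeZero p] (L : List ℕ) : (carets p L).Nodup := by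
  induction L with
  | nil => exact List.nodup_nil
  | cons a L ih =>
    refine List.nodup_cons.2 ⟨fun h => ?_, ih.map (graft_cons_injective a)⟩
    obtain ⟨v, -, hv⟩ := List.mem_map.1 h
    exact graft_ne_root a v hv

theorem exists_mem_carets_le [NeZero p] {a : ℕ} {L : List ℕ} (ha : a ∈ L) :
    ∃ v ∈ carets p L, a ≤ v.1 + (p - 1) * L.length := by
  induction L with
  | nil => simp at ha
  | cons b L ih =>
    rcases List.mem_cons.1 ha with rfl | ha
    · exact ⟨(a, []), List.mem_cons_self, Nat.le_add_right _ _⟩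
    · obtain ⟨v, hv, hav⟩ := ih ha
      refine ⟨graft List.cons b v, List.mem_cons_of_mem _ (List.mem_map_of_mem hv), ?_⟩
      have := fst_le_fst_graft_add (cons := List.cons) b v
      rw [List.length_cons, Nat.mul_succ]
      omega

/-- In the forest of `L`, the leaves number `l, …, l + p - 1` are the children of `u`. -/
def IsExposedCaret (L : List ℕ) (l : ℕ) (u : Node p) : Prop :=
  ∀ j : Fin p, leaf p L (l + j) = u.append [j]

/-- In the forest of `L`, the leaves number `l, …, l + p - 1` are the roots
`a, …, a + p - 1`, which therefore carry trivial trees. -/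
def IsRootBlock (p : ℕ) (L : List ℕ) (l a : ℕ) : Prop :=
  ∀ j : Fin p, leaf p L (l + j) = (a + j, [])

theorem isRootBlock_cons_of_lt [NeZero p] {L : List ℕ} {l a b : ℕ} (hba : b < a) :
    IsRootBlock p (b :: L) l a ↔ IsRootBlock p L l (a + (p - 1)) :=
  forall_congr' fun j => by
    rw [leaf, ← graft_add_of_lt j [] hba, (graft_cons_injective b).eq_iff]

theorem isRootBlock_cons_of_gt [NeZero p] {L : List ℕ} {l a k : ℕ} (hak : a < k) :
    IsRootBlock p ((k + (p - 1)) :: L) l a ↔ IsRootBlock p L l a :=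
  forall_congr' fun j => by
    rw [leaf, ← graft_of_lt (a := k + (p - 1)) (i := a + j) [] (by omega),
      (graft_cons_injective _).eq_iff, graft_of_lt _ (by omega)]

theorem not_isRootBlock_cons_add [NeZero p] {L : List ℕ} {l a : ℕ} (j : Fin p) :
    ¬ IsRootBlock p ((a + j) :: L) l a :=
  fun h => graft_ne_root _ _ (h j)

theorem isExposedCaret_cons_root [NeZero p] {L : List ℕ} {l a : ℕ} :
    IsExposedCaret (p := p) (a :: L) l (a, []) ↔ IsRootBlock p L l a :=
  forall_congr' fun j => by
    change graft List.cons a (leaf p L (l + j)) = (a, [j]) ↔ _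
    rw [← graft_add, (graft_cons_injective a).eq_iff]

theorem isExposedCaret_cons_graft [NeZero p] {L : List ℕ} {l a : ℕ} {u : Node p} :
    IsExposedCaret (a :: L) l (graft List.cons a u) ↔ IsExposedCaret L l u :=
  forall_congr' fun j => by rw [leaf, ← graft_append, (graft_cons_injective a).eq_iff]

theorem exists_isRootBlock [NeZero p] {L : List ℕ} {a : ℕ}
    (ha : ∀ j : Fin p, (a + j, []) ∉ carets p L) : ∃ l, IsRootBlock p L l a := by
  induction L generalizing a with
  | nil => exact ⟨a, fun _ => rfl⟩
  | cons b L ih =>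
    have hgraft {v : Node p} (hv : graft List.cons b v ∉ carets p (b :: L)) : v ∉ carets p L :=
      fun hmem => hv (List.mem_cons_of_mem _ (List.mem_map_of_mem hmem))
    rcases root_cases p a b with hba | ⟨j, rfl⟩ | ⟨k, hak, rfl⟩
    · simp only [isRootBlock_cons_of_lt hba]
      exact ih fun j => hgraft (by rw [graft_add_of_lt j _ hba]; exact ha j)
    · exact absurd List.mem_cons_self (ha j)
    · simp only [isRootBlock_cons_of_gt hak]
      exact ih fun j => hgraft (by rw [graft_of_lt _ (by omega)]; exact ha j)

theorem exists_isExposedCaret [NeZero p] {L : List ℕ} {P : Node p → Prop}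
    (hP : ∀ v w, P v → P (v.append w)) (hL : ∃ v ∈ carets p L, P v) :
    ∃ u l, P u ∧ IsExposedCaret L l u := by
  induction L generalizing P with
  | nil => simp [carets] at hL
  | cons a L ih =>
    by_cases hbelow : ∃ v ∈ carets p L, P (graft List.cons a v)
    · obtain ⟨u, l, hu, hul⟩ := ih (P := fun v => P (graft List.cons a v))
        (fun v w hv => by rw [graft_append]; exact hP _ _ hv) hbelow
      exact ⟨_, l, hu, isExposedCaret_cons_graft.2 hul⟩
    · have hroot : P (a, []) := by
        obtain ⟨v, hv, hPv⟩ := hL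
        rcases List.mem_cons.1 hv with rfl | hv
        · exact hPv
        · obtain ⟨w, hw, rfl⟩ := List.mem_map.1 hv
          exact absurd ⟨w, hw, hPv⟩ hbelow
      have hleaf : ∀ j : Fin p, (a + j, []) ∉ carets p L := fun j hj =>
        hbelow ⟨_, hj, by rw [graft_add]; exact hP _ [j] hroot⟩
      obtain ⟨l, hl⟩ := exists_isRootBlock hleaf
      exact ⟨_, l, hroot, isExposedCaret_cons_root.2 hl⟩

theorem IsRootBlock.exists_xg_mul_posWord_eq [NeZero p] {L : List ℕ} {l a : ℕ}
    (h : IsRootBlock p L l a) :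
    ∃ L' : List ℕ, L'.length = L.length ∧ xg p a * posWord p L = posWord p L' * xg p l := by
  induction L generalizing a with
  | nil =>
    obtain rfl : l = a := by simpa [leaf] using h 0
    exact ⟨[], rfl, by simp⟩
  | cons b L ih =>
    rcases root_cases p a b with hba | ⟨j, rfl⟩ | ⟨k, hak, rfl⟩
    · obtain ⟨L', hlen, hL'⟩ := ih ((isRootBlock_cons_of_lt hba).1 h)
      refine ⟨b :: L', by simp [hlen], ?_⟩
      rw [posWord_cons, posWord_cons, mul_assoc, ← hL', ← mul_assoc, ← mul_assoc, xg_mul_xg hba]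
    · exact absurd h (not_isRootBlock_cons_add j)
    · obtain ⟨L', hlen, hL'⟩ := ih ((isRootBlock_cons_of_gt hak).1 h)
      refine ⟨k :: L', by simp [hlen], ?_⟩
      rw [posWord_cons, posWord_cons, mul_assoc, ← hL', ← mul_assoc, ← mul_assoc, xg_mul_xg hak]

theorem IsExposedCaret.exists_posWord_eq [NeZero p] {L : List ℕ} {l : ℕ} {u : Node p}
    (h : IsExposedCaret L l u) :
    ∃ L' : List ℕ, L'.length + 1 = L.length ∧ posWord p L = posWord p L' * xg p l := by
  induction L generalizing u with
  | nil => simpa [leaf, Node.append] using congrArg Prod.snd (h 0)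
  | cons a L ih =>
    by_cases hu : u = (a, [])
    · subst hu
      obtain ⟨L', hlen, hL'⟩ := (isExposedCaret_cons_root.1 h).exists_xg_mul_posWord_eq
      exact ⟨L', by simp [hlen], by rw [posWord_cons, hL']⟩
    · obtain ⟨v, rfl⟩ := exists_graft_eq_of_ne_root hu
      obtain ⟨L', hlen, hL'⟩ := ih (isExposedCaret_cons_graft.1 h)
      exact ⟨a :: L', by simp [hlen], by rw [posWord_cons, posWord_cons, hL', mul_assoc]⟩

end Forests

section Ends

theorem exists_cons_appendStream_ne {α : Type*} [Nontrivial α] (c : α) (w : List α) :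
    ∃ s : Stream' α, (c :: w) ++ₛ s ≠ s := by
  obtain ⟨d, hd⟩ := exists_ne c
  exact ⟨Stream'.const d, fun h => hd.symm (congrArg Stream'.head h)⟩

theorem appendStream_injective {α : Type*} [Nontrivial α] :
    Function.Injective fun (w : List α) (s : Stream' α) => w ++ₛ s := by
  intro w w' h
  rw [funext_iff] at h
  induction w generalizing w' with
  | nil =>
    cases w' with
    | nil => rfl
    | cons d w' =>
      obtain ⟨s, hs⟩ := exists_cons_appendStream_ne d w'
      exact absurd (h s).symm hs
  | cons c w ih =>
    cases w' with
    | nil =>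
      obtain ⟨s, hs⟩ := exists_cons_appendStream_ne c w
      exact absurd (h s) hs
    | cons d w' =>
      have hcons s : c = d ∧ w ++ₛ s = w' ++ₛ s := Stream'.cons_injective2 (h s)
      rw [(hcons (Stream'.const c)).1, ih fun s => (hcons s).2]

variable {p : ℕ}

/-- An end of the infinite `p`-ary forest: a root and an infinite address below it. -/
abbrev Point (p : ℕ) : Type := ℕ × Stream' (Fin p)

/-- The end reached by following the infinite address `s` from `v`. -/
def Node.appendStream (v : Node p) (s : Stream' (Fin p)) : Point p := v.map id (· ++ₛ s)

theorem Node.append_appendStream (v : Node p) (w : List (Fin p)) (s : Stream' (Fin p)) :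
    (v.append w).appendStream s = v.appendStream (w ++ₛ s) := by
  simp [Node.append, Node.appendStream, Prod.map]

theorem Node.eq_of_forall_appendStream_eq [p.AtLeastTwo] {v v' : Node p}
    (h : ∀ s, v.appendStream s = v'.appendStream s) : v = v' := by
  have hp : 2 ≤ p := Nat.AtLeastTwo.prop
  have : Nontrivial (Fin p) := Fin.nontrivial_iff_two_le.2 hp
  exact Prod.ext (Prod.ext_iff.1 (h (Stream'.const 0))).1
    (appendStream_injective (funext fun s => (Prod.ext_iff.1 (h s)).2))

theorem graft_appendStream (a : ℕ) (v : Node p) (s : Stream' (Fin p)) :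
    graft Stream'.cons a (v.appendStream s) = Node.appendStream (graft List.cons a v) s :=
  graft_map (fun j w => Stream'.cons_append_stream j w s) a v

theorem graft_stream_bijective [NeZero p] (a : ℕ) :
    Function.Bijective (graft (Stream'.cons : Fin p → _) a) :=
  ⟨graft_injective Stream'.cons_injective2 a,
    fun v => exists_graft_eq fun _ => ⟨v.2.head, v.2.tail, v.2.eta.symm⟩⟩

/-- The action of `F(p)` on the ends of the infinite `p`-ary forest. -/
noncomputable def endAction (p : ℕ) [NeZero p] : FP p →* Equiv.Perm (Point p) :=
  lift (fun a => Equiv.ofBijective _ (graft_stream_bijective a)) fun _ _ hij =>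
    Equiv.ext (graft_comm hij)

/-- The permutation `f` of the ends maps the cone below `v` to the cone below `v'` by the
canonical bijection, which changes only the part of the address up to `v`. -/
def MapsCone (f : Equiv.Perm (Point p)) (v v' : Node p) : Prop :=
  ∀ s, f (v.appendStream s) = v'.appendStream s

theorem mapsCone_xg [NeZero p] (a : ℕ) (v : Node p) :
    MapsCone (endAction p (xg p a)) v (graft List.cons a v) := fun s => by
  rw [endAction, lift_xg, ← graft_appendStream, Equiv.ofBijective_apply]

namespace MapsCone

variable {f g : Equiv.Perm (Point p)} {u v w : Node p}

theorem one (v : Node p) : MapsCone 1 v v := fun _ => rfl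

theorem mul (hf : MapsCone f v w) (hg : MapsCone g u v) : MapsCone (f * g) u w := fun s => by
  rw [Equiv.Perm.mul_apply, hg, hf]

theorem inv (hf : MapsCone f u v) : MapsCone f⁻¹ v u := fun s => by
  rw [Equiv.Perm.inv_eq_iff_eq, hf]

theorem append (hf : MapsCone f u v) (w : List (Fin p)) :
    MapsCone f (u.append w) (v.append w) := fun s => by
  rw [Node.append_appendStream, Node.append_appendStream, hf]

theorem pow_iterate {φ : Node p → Node p} (hf : ∀ v, MapsCone f v (φ v)) (k : ℕ)
    (v : Node p) : MapsCone (f ^ k) v (φ^[k] v) := by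
  induction k with
  | zero => exact one v
  | succ k ih =>
    rw [pow_succ', Function.iterate_succ_apply']
    exact (hf _).mul ih

theorem right_unique [p.AtLeastTwo] (hv : MapsCone f u v) (hw : MapsCone f u w) : v = w :=
  Node.eq_of_forall_appendStream_eq fun s => (hv s).symm.trans (hw s)

theorem left_unique [p.AtLeastTwo] (hu : MapsCone f u w) (hv : MapsCone f v w) : u = v :=
  hu.inv.right_unique hv.inv

end MapsCone

/-- The nodes whose cone is not mapped to a cone by the canonical bijection. -/
def brokenNodes (f : Equiv.Perm (Point p)) : Set (Node p) := {v | ¬ ∃ v', MapsCone f v v'}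

theorem encard_brokenNodes_mul_le [p.AtLeastTwo] (f g : Equiv.Perm (Point p)) :
    (brokenNodes (f * g)).encard ≤ (brokenNodes f).encard + (brokenNodes g).encard := by
  have himage : ∀ v ∈ brokenNodes (f * g) \ brokenNodes g,
      ∃ v' ∈ brokenNodes f, MapsCone g v v' := by
    rintro v ⟨hfg, hg⟩
    obtain ⟨v', hv'⟩ := not_not.1 hg
    exact ⟨v', fun ⟨w, hw⟩ => hfg ⟨w, hw.mul hv'⟩, hv'⟩
  choose! φ hφ hφg using himage
  have hinj : Set.InjOn φ (brokenNodes (f * g) \ brokenNodes g) := fun v hv w hw hvw =>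
    (hφg v hv).left_unique (hvw ▸ hφg w hw)
  calc (brokenNodes (f * g)).encard
      ≤ (brokenNodes (f * g) \ brokenNodes g).encard + (brokenNodes g).encard :=
        Set.encard_le_encard_sdiff_add_encard _ _
    _ ≤ (brokenNodes f).encard + (brokenNodes g).encard := by
        exact add_le_add_left (Set.encard_le_encard_of_injOn hφ hinj) _

theorem brokenNodes_xg [NeZero p] (a : ℕ) : brokenNodes (endAction p (xg p a)) = ∅ :=
  Set.eq_empty_of_forall_notMem fun v hv => hv ⟨_, mapsCone_xg a v⟩

theorem brokenNodes_xg_inv_subset [NeZero p] (a : ℕ) :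
    brokenNodes (endAction p (xg p a)⁻¹) ⊆ {(a, [])} := fun v hv => by
  by_contra hne
  obtain ⟨u, rfl⟩ := exists_graft_eq_of_ne_root hne
  exact hv ⟨u, by rw [map_inv]; exact (mapsCone_xg a u).inv⟩

theorem encard_brokenNodes_le_wlen [p.AtLeastTwo] (y : FP p) :
    (brokenNodes (endAction p y)).encard ≤ wlen p y := by
  refine wordLength_induction closure_generators
    (P := fun n y => (brokenNodes (endAction p y)).encard ≤ n) ?_ ?_ ?_ ?_ y
  · have hone : brokenNodes (1 : Equiv.Perm (Point p)) = ∅ :=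
      Set.eq_empty_of_forall_notMem fun v hv => hv ⟨v, MapsCone.one v⟩
    simp [hone]
  · rintro _ ⟨a, -, rfl⟩
    simp [brokenNodes_xg]
  · rintro _ ⟨a, -, rfl⟩
    simpa using Set.encard_le_encard (brokenNodes_xg_inv_subset (p := p) a)
  · intro m n x y hx hy
    rw [map_mul, Nat.cast_add]
    exact (encard_brokenNodes_mul_le _ _).trans (add_le_add hx hy)

/-- From the `m`-th root on, `f` maps whole trees to whole trees, and moves none of them by more
than `m` roots to the left. -/
def ShiftsRootsBeyond (f : Equiv.Perm (Point p)) (m : ℕ) : Prop :=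
  ∀ i, m ≤ i → ∃ i', i ≤ i' + m ∧ MapsCone f (i, []) (i', [])

theorem ShiftsRootsBeyond.mul {f g : Equiv.Perm (Point p)} {m n : ℕ}
    (hf : ShiftsRootsBeyond f m) (hg : ShiftsRootsBeyond g n) :
    ShiftsRootsBeyond (f * g) (m + n) := fun i hi => by
  obtain ⟨j, hij, hj⟩ := hg i (by omega)
  obtain ⟨k, hjk, hk⟩ := hf j (by omega)
  exact ⟨k, by omega, hk.mul hj⟩

theorem mapsCone_xg_of_lt [NeZero p] {a i : ℕ} (hai : a < i) :
    MapsCone (endAction p (xg p a)) (i + (p - 1), []) (i, []) :=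
  graft_of_gt (cons := List.cons (α := Fin p)) [] hai ▸ mapsCone_xg a _

theorem shiftsRootsBeyond_xg [NeZero p] {a : ℕ} (ha : a < p) :
    ShiftsRootsBeyond (endAction p (xg p a)) (2 * p) := fun i hi => by
  obtain ⟨k, rfl⟩ := Nat.exists_eq_add_of_le' (show p - 1 ≤ i by omega)
  exact ⟨k, by omega, mapsCone_xg_of_lt (by omega)⟩

theorem shiftsRootsBeyond_xg_inv [NeZero p] {a : ℕ} (ha : a < p) :
    ShiftsRootsBeyond (endAction p (xg p a)⁻¹) (2 * p) := fun i hi => by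
  refine ⟨i + (p - 1), by omega, ?_⟩
  rw [map_inv]
  exact (mapsCone_xg_of_lt (by omega)).inv

theorem shiftsRootsBeyond_wlen [p.AtLeastTwo] (y : FP p) :
    ShiftsRootsBeyond (endAction p y) (2 * p * wlen p y) := by
  refine wordLength_induction closure_generators
    (P := fun n y => ShiftsRootsBeyond (endAction p y) (2 * p * n)) ?_ ?_ ?_ ?_ y
  · rw [map_one]
    exact fun i _ => ⟨i, by omega, MapsCone.one _⟩
  · rintro _ ⟨a, ha, rfl⟩
    simpa using shiftsRootsBeyond_xg ha
  · rintro _ ⟨a, ha, rfl⟩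
    simpa using shiftsRootsBeyond_xg_inv ha
  · intro m n x y hx hy
    rw [map_mul, mul_add]
    exact hx.mul hy

end Ends

section CombCode

theorem flatMap_injective_of_prefix_free {α β : Type*} {c : α → List β} (hnil : ∀ a, c a ≠ [])
    (hprefix : ∀ a b, c a <+: c b → a = b) : Function.Injective (List.flatMap c) := by
  intro u v h
  induction u generalizing v with
  | nil =>
    cases v with
    | nil => rfl
    | cons b v => exact absurd (List.append_eq_nil_iff.1 h.symm).1 (hnil b)
  | cons a u ih =>
    cases v with
    | nil => exact absurd (List.append_eq_nil_iff.1 h).1 (hnil a)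
    | cons b v =>
      rw [List.flatMap_cons, List.flatMap_cons] at h
      obtain rfl : a = b :=
        (List.prefix_or_prefix_of_prefix ⟨_, h⟩ (List.prefix_append _ _)).elim (hprefix a b)
          fun hba => (hprefix b a hba).symm
      rw [ih (List.append_cancel_left h)]

variable {p : ℕ} (q : ℕ)

/-- The addresses of the leaves, from left to right, of the left comb of `p - 1` carets of arity
`q`, leaving out the leaves which are neither the leftmost nor the rightmost child of a caret. -/
def combCode [NeZero q] (j : Fin p) : List (Fin q) :=
  if (j : ℕ) = 0 then List.replicate (p - 1) 0 else List.replicate (p - 1 - j) 0 ++ [⊤]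

/-- The node of the `q`-ary forest which corresponds to `v` when the root `i` becomes the root
`(q - 1) * i` and every `p`-ary caret is replaced by a left comb of `p - 1` carets of arity `q`. -/
def combEncode [NeZero q] (v : Node p) : Node q :=
  ((q - 1) * v.1, v.2.flatMap (combCode q))

theorem combEncode_append [NeZero q] (v : Node p) (w : List (Fin p)) :
    combEncode q (v.append w) = (combEncode q v).append (w.flatMap (combCode q)) := by
  simp [combEncode, Node.append]

/-- The number of letters `0` at the end of a word. -/
def trailingZeros {q : ℕ} [NeZero q] (w : List (Fin q)) : ℕ := (w.rtakeWhile (· = 0)).length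

theorem trailingZeros_append_replicate {q : ℕ} [NeZero q] (w : List (Fin q)) (m : ℕ) :
    trailingZeros (w ++ List.replicate m 0) = trailingZeros w + m := by
  induction m with
  | zero => simp
  | succ m ih =>
    rw [List.replicate_succ', ← List.append_assoc, ← add_assoc, ← ih, trailingZeros,
      List.rtakeWhile_concat_pos _ _ _ (by simp), List.length_append]
    rfl

variable {q} [q.AtLeastTwo]

theorem top_ne_zero : (⊤ : Fin q) ≠ 0 := by
  have hq : 2 ≤ q := Nat.AtLeastTwo.prop
  rw [ne_eq, Fin.ext_iff, Fin.val_top, Fin.val_zero]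
  omega

theorem trailingZeros_concat_top (w : List (Fin q)) : trailingZeros (w ++ [⊤]) = 0 := by
  rw [trailingZeros, List.rtakeWhile_concat_neg _ _ _ (by simpa using top_ne_zero), List.length_nil]

theorem dvd_trailingZeros_flatMap_combCode (u : List (Fin p)) :
    p - 1 ∣ trailingZeros (u.flatMap (combCode q)) := by
  induction u using List.reverseRecOn with
  | nil => simp [trailingZeros]
  | append_singleton u a ih =>
    rw [List.flatMap_append, List.flatMap_singleton, combCode]
    split_ifs
    · rw [trailingZeros_append_replicate]
      exact dvd_add ih dvd_rfl
    · rw [← List.append_assoc, trailingZeros_concat_top]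
      exact dvd_zero _

theorem top_mem_combCode {j : Fin p} : ⊤ ∈ combCode q j ↔ (j : ℕ) ≠ 0 := by
  rw [combCode]
  split_ifs with hj
  · exact iff_of_false (fun h => top_ne_zero (List.eq_of_mem_replicate h)) (not_not.2 hj)
  · exact iff_of_true (List.mem_append_right _ (List.mem_singleton_self _)) hj

theorem idxOf_top_combCode (j : Fin p) : (combCode q j).idxOf ⊤ = p - 1 - j := by
  have hreplicate (m : ℕ) : (⊤ : Fin q) ∉ List.replicate m 0 := fun h =>
    top_ne_zero (List.eq_of_mem_replicate h)
  by_cases hj : (j : ℕ) = 0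
  · simp [combCode, hj, List.idxOf_eq_length (hreplicate _)]
  · simp [combCode, hj, List.idxOf_append_of_notMem (hreplicate _)]

theorem combCode_prefix_free {a b : Fin p} (hab : combCode q a <+: combCode q b) : a = b := by
  have hle := hab.idxOf_le ⊤
  simp only [idxOf_top_combCode] at hle
  by_cases ha : (a : ℕ) = 0
  · exact Fin.ext (by omega)
  · obtain ⟨t, ht⟩ := hab
    have heq := List.idxOf_append_of_mem (l₂ := t) (top_mem_combCode (q := q).2 ha)
    rw [ht, idxOf_top_combCode, idxOf_top_combCode] at heq
    exact Fin.ext (by omega)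

variable [p.AtLeastTwo]

theorem combCode_ne_nil (j : Fin p) : combCode q j ≠ [] := by
  have hp : 2 ≤ p := Nat.AtLeastTwo.prop
  rw [combCode]
  split_ifs
  · simpa [List.replicate_eq_nil_iff] using by omega
  · simp

theorem combEncode_injective : Function.Injective (combEncode q : Node p → Node q) := by
  rintro ⟨i, u⟩ ⟨j, v⟩ h
  have hq : 2 ≤ q := Nat.AtLeastTwo.prop
  obtain ⟨hij, huv⟩ := Prod.mk.inj h
  exact Prod.ext (Nat.eq_of_mul_eq_mul_left (by omega) hij)
    (flatMap_injective_of_prefix_free combCode_ne_nil (fun _ _ => combCode_prefix_free) huv)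

/-- A coded word has a multiple of `p - 1` trailing zeros, and by `hu'` so has `w`. This forces the
last letter of `u` to be the one coded by `[⊤]`. -/
theorem exists_eq_flatMap_combCode {w : List (Fin q)} {u u' : List (Fin p)}
    (hu : u.flatMap (combCode q) = w ++ [⊤])
    (hu' : u'.flatMap (combCode q) = w ++ List.replicate (p - 1) 0) :
    ∃ t : List (Fin p), w = t.flatMap (combCode q) := by
  have hp : 2 ≤ p := Nat.AtLeastTwo.prop
  have hw : p - 1 ∣ trailingZeros w := by
    have := dvd_trailingZeros_flatMap_combCode (q := q) u'
    rwa [hu', trailingZeros_append_replicate, Nat.dvd_add_self_right] at this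
  obtain rfl | ⟨t, c, rfl⟩ := u.eq_nil_or_concat
  · simp at hu
  rw [List.concat_eq_append, List.flatMap_append, List.flatMap_singleton, combCode] at hu
  split_ifs at hu with hc
  · have := congrArg trailingZeros hu
    rw [trailingZeros_append_replicate, trailingZeros_concat_top] at this
    omega
  · rw [← List.append_assoc] at hu
    obtain rfl := List.append_cancel_right hu
    rw [trailingZeros_append_replicate,
      Nat.dvd_add_right (dvd_trailingZeros_flatMap_combCode t)] at hw
    have hzero : p - 1 - c = 0 := Nat.eq_zero_of_dvd_of_lt hw (by omega)
    exact ⟨t, by rw [hzero, List.replicate_zero, List.append_nil]⟩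

theorem exists_eq_append_of_combEncode_eq {v : Node q} {u : Fin p → Node p}
    (hu : ∀ j, combEncode q (u j) = v.append (combCode q j)) :
    ∃ t : Node p, ∀ j, u j = t.append [j] := by
  have hp : 2 ≤ p := Nat.AtLeastTwo.prop
  have hp' : p - 1 ≠ 0 := by omega
  have h0 := hu 0
  have htop := hu ⊤
  simp only [combEncode, Node.append, Prod.ext_iff, Prod.map_fst, Prod.map_snd, id] at h0 htop
  obtain ⟨t, ht⟩ := exists_eq_flatMap_combCode (w := v.2) (u := (u ⊤).2) (u' := (u 0).2)
    (by simp [htop.2, combCode, hp']) (by simp [h0.2, combCode])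
  refine ⟨((u 0).1, t), fun j => combEncode_injective (q := q) ?_⟩
  rw [hu, combEncode_append, List.flatMap_singleton]
  congr 1
  exact Prod.ext h0.1.symm ht

end CombCode

section CombHom

variable {p q : ℕ}

theorem graft_cons_iterate_self [NeZero q] (a k : ℕ) (w : List (Fin q)) :
    (graft List.cons a)^[k] (a, w) = (a, List.replicate k 0 ++ w) := by
  induction k with
  | zero => rfl
  | succ k ih =>
    rw [Function.iterate_succ_apply', ih]
    exact graft_add a 0 _

theorem graft_iterate_of_gt {α : Type*} {cons : Fin q → α → α} {a i : ℕ} (hai : a < i) (k : ℕ)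
    (w : α) : (graft cons a)^[k] (i + k * (q - 1), w) = (i, w) := by
  induction k with
  | zero => simp
  | succ k ih =>
    rw [Function.iterate_succ_apply, Nat.succ_mul, ← add_assoc, graft_of_gt _ (by omega), ih]

theorem graft_cons_iterate_comb [q.AtLeastTwo] (a d m : ℕ) (w : List (Fin q)) :
    (graft List.cons a)^[m + 1 + d] (a + (q - 1) + d * (q - 1), w) =
      (a, List.replicate m 0 ++ ⊤ :: w) := by
  have hq : 2 ≤ q := Nat.AtLeastTwo.prop
  rw [Function.iterate_add_apply, graft_iterate_of_gt (by omega), Function.iterate_succ_apply,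
    ← Fin.val_top q, graft_add, graft_cons_iterate_self]

theorem graft_iterate_combEncode [p.AtLeastTwo] [q.AtLeastTwo] (k : ℕ) (v : Node p) :
    (graft List.cons ((q - 1) * k))^[p - 1] (combEncode q v) =
      combEncode q (graft List.cons k v) := by
  have hp : 2 ≤ p := Nat.AtLeastTwo.prop
  have hq : 2 ≤ q := Nat.AtLeastTwo.prop
  obtain ⟨i, w⟩ := v
  have hlt {a b : ℕ} (h : a < b) : (q - 1) * a < (q - 1) * b :=
    Nat.mul_lt_mul_of_pos_left h (by omega)
  rcases root_cases p k i with hik | ⟨j, rfl⟩ | ⟨m, hkm, rfl⟩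
  · rw [graft_of_lt _ hik]
    exact Function.iterate_fixed (graft_of_lt _ (hlt hik)) _
  · rw [graft_add, combEncode, combEncode, List.flatMap_cons, combCode]
    split_ifs with hj
    · rw [hj, add_zero, graft_cons_iterate_self]
    · obtain ⟨d, hd⟩ := Nat.exists_eq_add_one_of_ne_zero hj
      have hroot : (q - 1) * (k + j) = (q - 1) * k + (q - 1) + d * (q - 1) := by
        rw [hd]
        ring
      have hcarets : p - 1 = p - 1 - j + 1 + d := by omega
      rw [hroot, hcarets, graft_cons_iterate_comb, ← hcarets, List.append_assoc,
        List.singleton_append]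
  · rw [graft_of_gt _ hkm, combEncode, combEncode, mul_add, mul_comm _ (p - 1)]
    exact graft_iterate_of_gt (hlt hkm) _ _

/-- The homomorphism `x_i ↦ x_{(q - 1) i}^{p - 1}`, which replaces every caret of a `p`-ary forest
by a left comb of `p - 1` carets of arity `q`. -/
def combHom (p q : ℕ) [p.AtLeastTwo] [q.AtLeastTwo] : FP p →* FP q :=
  lift (fun i => xg q ((q - 1) * i) ^ (p - 1)) fun i j hij => by
    have hq : 2 ≤ q := Nat.AtLeastTwo.prop
    have hsemiconj : SemiconjBy (xg q ((q - 1) * i) ^ (p - 1)) (xg q ((q - 1) * (j + (p - 1))))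
        (xg q ((q - 1) * j)) := by
      rw [mul_add, mul_comm _ (p - 1)]
      exact (xg_mul_xg_pow (Nat.mul_lt_mul_of_pos_left hij (by omega)) _).symm
    exact (hsemiconj.pow_right (p - 1)).symm

theorem mapsCone_combHom_posWord [p.AtLeastTwo] [q.AtLeastTwo] (L : List ℕ) (l : ℕ) :
    MapsCone (endAction q (combHom p q (posWord p L))) (combEncode q ((l, []) : Node p))
      (combEncode q (leaf p L l)) := by
  induction L with
  | nil => simpa [leaf] using MapsCone.one _
  | cons a L ih =>
    rw [posWord_cons, map_mul, map_mul, leaf, ← graft_iterate_combEncode, combHom, lift_xg, map_pow]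
    exact (MapsCone.pow_iterate (mapsCone_xg _) _ _).mul ih

end CombHom

section ReducedFractions

variable {p q : ℕ}

/-- `x = P Q⁻¹` as a fraction of positive words, with the least possible number of letters. -/
def IsReducedFraction (x : FP p) (P Q : List ℕ) : Prop :=
  x = posWord p P * (posWord p Q)⁻¹ ∧
    ∀ P' Q', x = posWord p P' * (posWord p Q')⁻¹ → P.length + Q.length ≤ P'.length + Q'.length

theorem IsReducedFraction.inv {x : FP p} {P Q : List ℕ} (h : IsReducedFraction x P Q) :
    IsReducedFraction x⁻¹ Q P := by
  refine ⟨by rw [h.1, mul_inv_rev, inv_inv], fun P' Q' hx => ?_⟩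
  rw [inv_eq_iff_eq_inv, mul_inv_rev, inv_inv] at hx
  have := h.2 Q' P' hx
  omega

theorem exists_isReducedFraction [NeZero p] (x : FP p) :
    ∃ P Q, IsReducedFraction x P Q ∧ (0 :: P).IsChain (· ≤ ·) ∧ (0 :: Q).IsChain (· ≤ ·) := by
  obtain ⟨P₀, Q₀, hx₀⟩ := exists_eq_posWord_mul_inv x
  obtain ⟨⟨P₁, Q₁⟩, hx₁, hmin⟩ := WellFounded.has_min
    (measure fun PQ : List ℕ × List ℕ => PQ.1.length + PQ.2.length).wf
    {PQ | x = posWord p PQ.1 * (posWord p PQ.2)⁻¹} ⟨(P₀, Q₀), hx₀⟩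
  obtain ⟨P, hP, hPlen, hPprod⟩ := exists_isChain_posWord_eq (p := p) P₁
  obtain ⟨Q, hQ, hQlen, hQprod⟩ := exists_isChain_posWord_eq (p := p) Q₁
  refine ⟨P, Q, ⟨by rw [← hPprod, ← hQprod, hx₁], fun P' Q' hx => ?_⟩, hP, hQ⟩
  rw [hPlen, hQlen]
  exact not_lt.1 (hmin (P', Q') hx)

variable [p.AtLeastTwo] [q.AtLeastTwo] {x : FP p} {P Q : List ℕ}

/-- Otherwise there is an exposed caret of the forest of `Q` which is also exposed, at the same
leaves, in the forest of `P`, and cancelling both yields a shorter fraction. -/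
theorem IsReducedFraction.combEncode_mem_brokenNodes (h : IsReducedFraction x P Q) {v : Node p}
    (hv : v ∈ carets p Q) : combEncode q v ∈ brokenNodes (endAction q (combHom p q x)) := by
  intro hmaps
  have hleaf l : MapsCone (endAction q (combHom p q x)) (combEncode q (leaf p Q l))
      (combEncode q (leaf p P l)) := by
    rw [h.1, map_mul, map_mul, map_inv, map_inv]
    exact (mapsCone_combHom_posWord P l).mul (mapsCone_combHom_posWord Q l).inv
  obtain ⟨u, l, ⟨u', hu⟩, huQ⟩ := exists_isExposedCaret
    (P := fun v => ∃ v', MapsCone (endAction q (combHom p q x)) (combEncode q v) v')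
    (fun v w ⟨v', hv'⟩ => ⟨_, by rw [combEncode_append]; exact hv'.append _⟩) ⟨v, hv, hmaps⟩
  have hdecode (j : Fin p) : combEncode q (leaf p P (l + j)) = u'.append (combCode q j) := by
    have hj := hleaf (l + j)
    rw [huQ j, combEncode_append, List.flatMap_singleton] at hj
    exact hj.right_unique (hu.append _)
  obtain ⟨t, htP⟩ := exists_eq_append_of_combEncode_eq hdecode
  obtain ⟨P', hP', hPP'⟩ := IsExposedCaret.exists_posWord_eq htP
  obtain ⟨Q', hQ', hQQ'⟩ := huQ.exists_posWord_eq
  have := h.2 P' Q' (by rw [h.1, hPP', hQQ']; group)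
  omega

theorem IsReducedFraction.length_le_wlen_combHom (h : IsReducedFraction x P Q) :
    Q.length ≤ wlen q (combHom p q x) := by
  have hsubset : combEncode q '' {v | v ∈ carets p Q} ⊆
      brokenNodes (endAction q (combHom p q x)) := by
    rintro _ ⟨v, hv, rfl⟩
    exact h.combEncode_mem_brokenNodes hv
  have hcard : {v | v ∈ carets p Q}.encard = Q.length := by
    rw [← length_carets (p := p), ← List.toFinset_card_of_nodup (nodup_carets Q),
      ← Set.encard_coe_eq_coe_finsetCard, List.coe_toFinset]
  rw [← Nat.cast_le (α := ℕ∞), ← hcard, ← (combEncode_injective (q := q)).encard_image]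
  exact (Set.encard_le_encard hsubset).trans (encard_brokenNodes_le_wlen _)

theorem IsReducedFraction.le_mul_wlen_combHom (h : IsReducedFraction x P Q) {a : ℕ} (ha : a ∈ Q) :
    a ≤ (p - 1 + 2 * q) * wlen q (combHom p q x) := by
  have hq : 2 ≤ q := Nat.AtLeastTwo.prop
  obtain ⟨v, hv, hav⟩ := exists_mem_carets_le (p := p) ha
  have hroot : v.1 < 2 * q * wlen q (combHom p q x) := by
    by_contra! hfar
    have hle : v.1 ≤ (q - 1) * v.1 := Nat.le_mul_of_pos_left _ (by omega)
    obtain ⟨i, -, hi⟩ := shiftsRootsBeyond_wlen (combHom p q x) _ (hfar.trans hle)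
    exact h.combEncode_mem_brokenNodes hv ⟨_, hi.append (v.2.flatMap (combCode q))⟩
  calc a ≤ v.1 + (p - 1) * Q.length := hav
    _ ≤ 2 * q * wlen q (combHom p q x) + (p - 1) * wlen q (combHom p q x) :=
      Nat.add_le_add hroot.le (Nat.mul_le_mul_left _ h.length_le_wlen_combHom)
    _ = (p - 1 + 2 * q) * wlen q (combHom p q x) := by ring

theorem IsReducedFraction.wlen_posWord_le (h : IsReducedFraction x P Q)
    (hQ : (0 :: Q).IsChain (· ≤ ·)) :
    wlen p (posWord p Q) ≤ (1 + 2 * (p - 1 + 2 * q)) * wlen q (combHom p q x) := by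
  calc wlen p (posWord p Q) ≤ Q.length + 2 * ((p - 1 + 2 * q) * wlen q (combHom p q x)) :=
      Thompson.wlen_posWord_le hQ fun a ha => h.le_mul_wlen_combHom ha
    _ ≤ wlen q (combHom p q x) + 2 * ((p - 1 + 2 * q) * wlen q (combHom p q x)) :=
      Nat.add_le_add_right h.length_le_wlen_combHom _
    _ = (1 + 2 * (p - 1 + 2 * q)) * wlen q (combHom p q x) := by ring

theorem wlen_le_mul_wlen_combHom (p q : ℕ) [p.AtLeastTwo] [q.AtLeastTwo] (x : FP p) :
    wlen p x ≤ 2 * (1 + 2 * (p - 1 + 2 * q)) * wlen q (combHom p q x) := by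
  obtain ⟨P, Q, h, hP, hQ⟩ := exists_isReducedFraction x
  have hQlen := h.wlen_posWord_le (q := q) hQ
  have hPlen := h.inv.wlen_posWord_le (q := q) hP
  rw [map_inv, wlen_inv] at hPlen
  calc wlen p x ≤ wlen p (posWord p P) + wlen p (posWord p Q)⁻¹ := h.1 ▸ wlen_mul_le _ _
    _ = wlen p (posWord p P) + wlen p (posWord p Q) := by rw [wlen_inv]
    _ ≤ 2 * (1 + 2 * (p - 1 + 2 * q)) * wlen q (combHom p q x) := by
      rw [mul_assoc, two_mul]
      exact Nat.add_le_add hPlen hQlen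

end ReducedFractions

end Thompson

/-- Theorem 10. For any `p, q ≥ 2` there is an injective group
homomorphism `Ψ : F(p) → F(q)` which is a quasi-isometric embedding. -/
theorem statement6 (p q : ℕ) (hp : 2 ≤ p) (hq : 2 ≤ q) :
    ∃ Ψ : FP p →* FP q, Function.Injective Ψ ∧
      ∃ C : ℝ, 1 ≤ C ∧ ∀ x : FP p,
        (1 / C) * (wlen p x : ℝ) ≤ (wlen q (Ψ x) : ℝ) ∧
          (wlen q (Ψ x) : ℝ) ≤ C * (wlen p x : ℝ) := by
  have : p.AtLeastTwo := ⟨hp⟩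
  have : q.AtLeastTwo := ⟨hq⟩
  have hlower := Thompson.wlen_le_mul_wlen_combHom p q
  obtain ⟨K, hupper⟩ := exists_wordLength_map_le Thompson.closure_generators
    (Thompson.finite_generators p) Thompson.closure_generators (Thompson.combHom p q)
  exact ⟨Thompson.combHom p q,
    injective_of_wordLength_le_mul Thompson.closure_generators hlower,
    exists_quasiIsometry_constant hupper hlower⟩
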